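/- Assume p(p+1)/2 > n. Then the set of symmetric n×n matrices C for which the following fails is a null set of symmetric matrices: every Y ∈ ℝ^{n×p} with diag(Y Yᵀ) = 1 such that there exists μ ∈ ℝ^n with (C − Diag(μ)) Y = 0 and ⟨Ẏ, (C − Diag(μ)) Ẏ⟩ ≥ 0 for all Ẏ ∈ ℝ^{n×p} with diag(Ẏ Yᵀ + Y Ẏᵀ) = 0, satisfies Tr(C Y Yᵀ) ≤ Tr(C Z Zᵀ) for all Z ∈ ℝ^{n×p} with diag(Z Zᵀ) = 1, and moreover Tr(C Y Yᵀ) ≤ Tr(C X) for every symmetric positive semidefinite X with diag(X) = 1. In words: for almost all C, every second-order critical point of the Max-Cut Burer–Monteiro problem is a global optimum and Y Yᵀ solves the Max-Cut SDP. -/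

import Mathlib

open Matrix MeasureTheory

noncomputable section

/-- Frobenius inner product `⟨A, B⟩ = Tr(Aᵀ B)`. -/
def frobInner {n p : ℕ} (A B : Matrix (Fin n) (Fin p) ℝ) : ℝ := (Aᵀ * B).trace

/-- Frobenius norm. -/
def frobNorm {n p : ℕ} (A : Matrix (Fin n) (Fin p) ℝ) : ℝ := Real.sqrt (frobInner A A)

/-- The constraint map 𝒜, `𝒜(X) i = Tr(A i * X)`. -/
def Aop {n m : ℕ} (A : Fin m → Matrix (Fin n) (Fin n) ℝ) (X : Matrix (Fin n) (Fin n) ℝ) :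
    Fin m → ℝ := fun i => (A i * X).trace

/-- The adjoint 𝒜*, `𝒜*(μ) = ∑ i, μ i • A i`. -/
def Aadj {n m : ℕ} (A : Fin m → Matrix (Fin n) (Fin n) ℝ) (μ : Fin m → ℝ) :
    Matrix (Fin n) (Fin n) ℝ := ∑ i, μ i • A i

/-- The SDP feasible set 𝒞. -/
def sdpFeas {n m : ℕ} (A : Fin m → Matrix (Fin n) (Fin n) ℝ) (b : Fin m → ℝ) :
    Set (Matrix (Fin n) (Fin n) ℝ) := {X | X.IsSymm ∧ Aop A X = b ∧ X.PosSemidef}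

/-- Optimal value `f* = inf {Tr(C X) : X ∈ 𝒞}` of the SDP. -/
def fstar {n m : ℕ} (A : Fin m → Matrix (Fin n) (Fin n) ℝ) (b : Fin m → ℝ)
    (C : Matrix (Fin n) (Fin n) ℝ) : ℝ := sInf ((fun X => (C * X).trace) '' sdpFeas A b)

/-- The factorized feasible set `ℳ_p = {Y : 𝒜(Y Yᵀ) = b}`. -/
def facFeas {n m : ℕ} (A : Fin m → Matrix (Fin n) (Fin n) ℝ) (b : Fin m → ℝ) (p : ℕ) :
    Set (Matrix (Fin n) (Fin p) ℝ) := {Y | Aop A (Y * Yᵀ) = b}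

/-- Tangent space `T_Yℳ = {Ydot : 𝒜(Ydot Yᵀ + Y Ydotᵀ) = 0}`. -/
def tangentSet {n m p : ℕ} (A : Fin m → Matrix (Fin n) (Fin n) ℝ)
    (Y : Matrix (Fin n) (Fin p) ℝ) : Set (Matrix (Fin n) (Fin p) ℝ) :=
  {Ydot | Aop A (Ydot * Yᵀ + Y * Ydotᵀ) = 0}

/-- Second-order critical point of the factorized problem. -/
def IsSOCP {n m p : ℕ} (A : Fin m → Matrix (Fin n) (Fin n) ℝ) (b : Fin m → ℝ)
    (C : Matrix (Fin n) (Fin n) ℝ) (Y : Matrix (Fin n) (Fin p) ℝ) : Prop :=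
  Y ∈ facFeas A b p ∧ ∃ μ : Fin m → ℝ,
    (C - Aadj A μ) * Y = 0 ∧
    ∀ Ydot ∈ tangentSet A Y, 0 ≤ frobInner Ydot ((C - Aadj A μ) * Ydot)

/-- The real vector space of symmetric `n × n` matrices. -/
def symmSpace (n : ℕ) : Submodule ℝ (Matrix (Fin n) (Fin n) ℝ) where
  carrier := {X | X.IsSymm}
  add_mem' := fun ha hb => ha.add hb
  zero_mem' := Matrix.isSymm_zero
  smul_mem' := fun c X hX => by
    show (c • X)ᵀ = c • X
    rw [Matrix.transpose_smul, hX]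

instance (n : ℕ) : MeasurableSpace ↥(symmSpace n) := borel _

/-- A set of symmetric matrices is null if it has measure zero for every additive Haar
measure on the finite-dimensional real vector space of symmetric `n × n` matrices. -/
def IsNullSymmSet (n : ℕ) (S : Set (Matrix (Fin n) (Fin n) ℝ)) : Prop :=
  ∀ μ : Measure ↥(symmSpace n), μ.IsAddHaarMeasure →
    μ {C : ↥(symmSpace n) | (C : Matrix (Fin n) (Fin n) ℝ) ∈ S} = 0

/-!
Let `Y` be second-order critical with multipliers `μ`, and let `S = C - Diag(μ)`.

If `Y` has a kernel vector `z ≠ 0`, then every rank-one direction `x zᵀ` is tangent at `Y`, and the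
second-order condition along it reads `|z|² ⟨x, S x⟩ ≥ 0`. Hence `S` is positive semidefinite, so
`μ` is a dual certificate for the optimality of `Y Yᵀ`.

If `Y` has full column rank `p`, then `S Y = 0` forces a symmetric `S` to be determined by its block
`T` on the `q = n - p` rows outside a row basis of `Y` and by the `q × p` coefficient matrix `W` of
those rows in that basis. So `C` lies in one of finitely many smooth images of a space of dimension
`q(q+1)/2 + qp + n = n(n+1)/2 - (p(p+1)/2 - n)`, which are null when `p(p+1)/2 > n`.
-/

section LinearAlgebra

variable {m k q R K : Type*}

lemma exists_sum_equiv_of_injective [Fintype m] [Fintype k] [Fintype q] {f : k → m}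
    (hf : Function.Injective f) (hcard : Fintype.card m = Fintype.card k + Fintype.card q) :
    ∃ e : k ⊕ q ≃ m, e ∘ Sum.inl = f := by
  classical
  have hcompl : Fintype.card q = Fintype.card ↥(Set.range f)ᶜ := by
    rw [Fintype.card_compl_set, Set.card_range_of_injective hf]
    lia
  exact ⟨((Equiv.ofInjective f hf).sumCongr (Fintype.equivOfCardEq hcompl)).trans
    (Equiv.Set.sumCompl (Set.range f)), by ext; simp⟩

lemma exists_injective_isUnit_submatrix [Field K] [Finite m] [Fintype k] [DecidableEq k]
    {Y : Matrix m k K} (hY : Function.Injective Y.mulVec) :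
    ∃ f : k → m, Function.Injective f ∧ IsUnit (Y.submatrix f id) := by
  have hrank : Y.rank = Fintype.card k := by
    rw [Matrix.rank, LinearMap.finrank_range_of_inj hY, Module.finrank_fintype_fun_eq_card]
  have hspan : Submodule.span K (Set.range Y.row) = ⊤ :=
    Submodule.eq_top_of_finrank_eq <| by
      rw [← Matrix.rank_eq_finrank_span_row, hrank, Module.finrank_fintype_fun_eq_card]
  obtain ⟨ι, a, ha, hrange, hli⟩ := exists_linearIndependent' K Y.row
  let φ : k ≃ ι := (Pi.basisFun K k).indexEquiv (Module.Basis.mk hli (hspan ▸ hrange).ge)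
  exact ⟨a ∘ φ, ha.comp φ.injective,
    linearIndependent_rows_iff_isUnit.mp (hli.comp φ φ.injective)⟩

/-- The symmetric matrices annihilating the columns of `[1; W]`, parametrized by their lower right
block `T`. -/
def kernelBlocks [CommRing R] [Fintype q] (T : Matrix q q R) (W : Matrix q k R) :
    Matrix (k ⊕ q) (k ⊕ q) R :=
  fromBlocks (Wᵀ * T * W) (-(Wᵀ * T)) (-(T * W)) T

lemma isSymm_kernelBlocks [CommRing R] [Fintype q] {T : Matrix q q R} (hT : T.IsSymm)
    (W : Matrix q k R) : (kernelBlocks T W).IsSymm :=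
  .fromBlocks (by simp [IsSymm, hT.eq, Matrix.mul_assoc]) (by simp [hT.eq]) hT

lemma eq_kernelBlocks_of_mul_fromRows_one_eq_zero [CommRing R] [Fintype k] [DecidableEq k]
    [Fintype q] {S : Matrix (k ⊕ q) (k ⊕ q) R} (hS : S.IsSymm) {W : Matrix q k R}
    (h : S * fromRows (1 : Matrix k k R) W = 0) : S = kernelBlocks S.toBlocks₂₂ W := by
  obtain ⟨A, B, C, T, rfl⟩ : ∃ A B C T, S = fromBlocks A B C T :=
    ⟨_, _, _, _, S.fromBlocks_toBlocks.symm⟩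
  obtain ⟨-, -, hCB, hT⟩ := isSymm_fromBlocks_iff.mp hS
  rw [fromBlocks_mul_fromRows, Matrix.mul_one, Matrix.mul_one, ← fromRows_zero] at h
  obtain ⟨hABW, hCTW⟩ := fromRows_inj h
  have hC : C = -(T * W) := eq_neg_of_add_eq_zero_left hCTW
  have hB : B = -(Wᵀ * T) := by rw [← hCB, hC, transpose_neg, transpose_mul, hT.eq]
  have hA : A = Wᵀ * T * W := by
    rw [eq_neg_of_add_eq_zero_left hABW, hB, Matrix.neg_mul, neg_neg]
  rw [kernelBlocks, toBlocks_fromBlocks₂₂, hA, hB, hC]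

lemma exists_eq_kernelBlocks_submatrix [Field K] [Fintype m] [Fintype k] [Fintype q]
    (hcard : Fintype.card m = Fintype.card k + Fintype.card q) {S : Matrix m m K} (hS : S.IsSymm)
    {Y : Matrix m k K} (hY : Function.Injective Y.mulVec) (hSY : S * Y = 0) :
    ∃ (e : k ⊕ q ≃ m) (T : Matrix q q K) (W : Matrix q k K),
      T.IsSymm ∧ S = (kernelBlocks T W).submatrix e.symm e.symm := by
  classical
  obtain ⟨f, hf, hunit⟩ := exists_injective_isUnit_submatrix hY
  obtain ⟨e, rfl⟩ := exists_sum_equiv_of_injective hf hcard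
  set Y₁ := Y.submatrix (e ∘ Sum.inl) id
  set Y₂ := Y.submatrix (e ∘ Sum.inr) id
  have hrows : fromRows 1 (Y₂ * Y₁⁻¹) = Y.submatrix e id * Y₁⁻¹ := by
    rw [← Matrix.mul_nonsing_inv Y₁ ((isUnit_iff_isUnit_det _).mp hunit), ← fromRows_mul]
    congr 1
    ext (i | i) j <;> rfl
  have hker : S.submatrix e e * fromRows (1 : Matrix k k K) (Y₂ * Y₁⁻¹) = 0 := by
    rw [hrows, ← Matrix.mul_assoc, submatrix_mul_equiv, hSY, submatrix_zero, Pi.zero_apply,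
      Pi.zero_apply, Matrix.zero_mul]
  have hSe : (S.submatrix e e).IsSymm := hS.submatrix e
  refine ⟨e, (S.submatrix e e).toBlocks₂₂, Y₂ * Y₁⁻¹, hSe.submatrix Sum.inr, ?_⟩
  rw [← eq_kernelBlocks_of_mul_fromRows_one_eq_zero hSe hker]
  simp

end LinearAlgebra

section SemidefiniteProgramming

variable {m k 𝕜 : Type*} [Fintype m]

open scoped ComplexOrder MatrixOrder Matrix.Norms.L2Operator in
lemma trace_mul_nonneg_of_posSemidef [RCLike 𝕜] {S X : Matrix m m 𝕜} (hS : S.PosSemidef)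
    (hX : X.PosSemidef) : 0 ≤ (S * X).trace := by
  classical
  obtain ⟨B, rfl⟩ := CStarAlgebra.nonneg_iff_eq_star_mul_self.mp hX.nonneg
  rw [← Matrix.mul_assoc, Matrix.trace_mul_comm, ← Matrix.mul_assoc]
  exact (hS.mul_mul_conjTranspose_same B).trace_nonneg

lemma trace_mul_le_of_posSemidef_sub_diagonal [DecidableEq m] {C W X : Matrix m m ℝ} {μ : m → ℝ}
    (hS : (C - diagonal μ).PosSemidef) (hSW : (C - diagonal μ) * W = 0) (hX : X.PosSemidef)
    (hdiag : W.diag = X.diag) : (C * W).trace ≤ (C * X).trace := by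
  have htrace (M : Matrix m m ℝ) :
      (C * M).trace = ((C - diagonal μ) * M).trace + μ ⬝ᵥ M.diag := by
    simp [Matrix.sub_mul, trace, dotProduct]
  calc (C * W).trace = μ ⬝ᵥ X.diag := by rw [htrace, hSW, trace_zero, zero_add, hdiag]
    _ ≤ ((C - diagonal μ) * X).trace + μ ⬝ᵥ X.diag :=
      le_add_of_nonneg_left (trace_mul_nonneg_of_posSemidef hS hX)
    _ = (C * X).trace := (htrace X).symm

lemma posSemidef_of_trace_nonneg_of_not_injective_mulVec [Fintype k] {S : Matrix m m ℝ}
    (hS : S.IsSymm) {Y : Matrix m k ℝ} (hY : ¬ Function.Injective Y.mulVec)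
    (h : ∀ V : Matrix m k ℝ, V * Yᵀ = 0 → 0 ≤ (Vᵀ * (S * V)).trace) : S.PosSemidef := by
  obtain ⟨z, hYz, hz⟩ : ∃ z, Y *ᵥ z = 0 ∧ z ≠ 0 := by
    simpa using (injective_iff_map_eq_zero Y.mulVecLin).not.mp hY
  refine .of_dotProduct_mulVec_nonneg hS fun x ↦ ?_
  have hxz : 0 ≤ ((vecMulVec x z)ᵀ * (S * vecMulVec x z)).trace :=
    h _ (by rw [vecMulVec_mul, vecMul_transpose, hYz, vecMulVec_zero])
  have htrace : ((vecMulVec x z)ᵀ * (S * vecMulVec x z)).trace = (x ⬝ᵥ S *ᵥ x) * (z ⬝ᵥ z) := by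
    rw [mul_vecMulVec, transpose_vecMulVec, vecMulVec_mul_vecMulVec, trace_vecMulVec,
      dotProduct_smul, smul_eq_mul, mul_comm]
  rw [htrace] at hxz
  exact nonneg_of_mul_nonneg_left hxz (dotProduct_star_self_pos_iff.mpr hz)

end SemidefiniteProgramming

section NullRange

lemma addHaar_range_eq_zero_of_finrank_lt {E F : Type*} [NormedAddCommGroup E] [NormedSpace ℝ E]
    [FiniteDimensional ℝ E] [NormedAddCommGroup F] [NormedSpace ℝ F] [FiniteDimensional ℝ F]
    [MeasurableSpace F] [hF : BorelSpace F] (ν : Measure F) [hν : ν.IsAddHaarMeasure] {f : E → F}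
    (hf : ContDiff ℝ 1 f) (h : Module.finrank ℝ E < Module.finrank ℝ F) :
    ν (Set.range f) = 0 := by
  have hac : ν ≪ Measure.hausdorffMeasure ((Module.finrank ℝ F : NNReal) : ℝ) := by
    rw [NNReal.coe_natCast,
      Measure.isAddLeftInvariant_eq_smul ν (Measure.hausdorffMeasure (Module.finrank ℝ F : ℝ))]
    exact Measure.smul_absolutelyContinuous
  exact measure_zero_of_dimH_lt hac (hf.dimH_range_le.trans_lt (mod_cast h))

lemma contDiff_matrix_mul_apply {E l m k : Type*} [NormedAddCommGroup E] [NormedSpace ℝ E]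
    [Fintype m] {d : WithTop ℕ∞} {A : E → Matrix l m ℝ} {B : E → Matrix m k ℝ}
    (hA : ∀ i j, ContDiff ℝ d fun x ↦ A x i j) (hB : ∀ i j, ContDiff ℝ d fun x ↦ B x i j)
    (i : l) (j : k) : ContDiff ℝ d fun x ↦ (A x * B x) i j :=
  ContDiff.sum fun a _ ↦ (hA i a).mul (hB a j)

lemma contDiff_kernelBlocks_apply {E k q : Type*} [NormedAddCommGroup E] [NormedSpace ℝ E]
    [Fintype q] {d : WithTop ℕ∞} {T : E → Matrix q q ℝ} {W : E → Matrix q k ℝ}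
    (hT : ∀ i j, ContDiff ℝ d fun x ↦ T x i j) (hW : ∀ i j, ContDiff ℝ d fun x ↦ W x i j) :
    ∀ i j, ContDiff ℝ d fun x ↦ kernelBlocks (T x) (W x) i j := by
  have hWT := contDiff_matrix_mul_apply (fun i j ↦ hW j i) hT
  rintro (i | i) (j | j)
  exacts [contDiff_matrix_mul_apply hWT hW i j, (hWT i j).neg,
    (contDiff_matrix_mul_apply hT hW i j).neg, hT i j]

/-- The coordinates of a symmetric matrix given by its entries at unordered pairs of indices. -/
def symmSpaceEquivSym2 (n : ℕ) : symmSpace n ≃ₗ[ℝ] (Sym2 (Fin n) → ℝ) where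
  toFun X := Sym2.lift ⟨fun i j ↦ X.1 i j, fun i j ↦ X.2.apply j i⟩
  invFun t := ⟨of fun i j ↦ t s(i, j), IsSymm.ext fun i j ↦ congrArg t Sym2.eq_swap⟩
  map_add' X Z := by ext ⟨i, j⟩; rfl
  map_smul' c X := by ext ⟨i, j⟩; rfl
  left_inv X := rfl
  right_inv t := by ext ⟨i, j⟩; rfl

lemma finrank_symmSpace (n : ℕ) : Module.finrank ℝ (symmSpace n) = (n + 1).choose 2 := by
  rw [(symmSpaceEquivSym2 n).finrank_eq, Module.finrank_fintype_fun_eq_card, Sym2.card,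
    Fintype.card_fin]

lemma add_succ_choose_two (p q : ℕ) :
    (p + q + 1).choose 2 = (q + 1).choose 2 + q * p + (p + 1).choose 2 := by
  induction p with
  | zero => simp
  | succ p ih =>
    have hl := Nat.choose_succ_succ' (p + q + 1) 1
    have hr := Nat.choose_succ_succ' (p + 1) 1
    rw [Nat.choose_one_right] at hl hr
    grind

attribute [local instance] Matrix.normedAddCommGroup Matrix.normedSpace

lemma contDiff_symmSpace_iff {E : Type*} [NormedAddCommGroup E] [NormedSpace ℝ E] {n : ℕ}
    {d : WithTop ℕ∞} {f : E → symmSpace n} :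
    ContDiff ℝ d f ↔ ∀ i j, ContDiff ℝ d fun x ↦ (f x).1 i j := by
  rw [← (symmSpaceEquivSym2 n).toContinuousLinearEquiv.comp_contDiff_iff, contDiff_pi]
  exact Sym2.forall

/-- The smooth chart, associated with a splitting `e` of the indices, of the costs `S + Diag(d)`
where `S`, up to this splitting, is `kernelBlocks T W`; its arguments are `(T, W, d)`. -/
def costChart {n p q : ℕ} (e : Fin p ⊕ Fin q ≃ Fin n)
    (x : symmSpace q × Matrix (Fin q) (Fin p) ℝ × (Fin n → ℝ)) : symmSpace n :=
  ⟨(kernelBlocks x.1.1 x.2.1).submatrix e.symm e.symm + diagonal x.2.2,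
    ((isSymm_kernelBlocks x.1.2 x.2.1).submatrix e.symm).add (isSymm_diagonal x.2.2)⟩

lemma contDiff_costChart {n p q : ℕ} (e : Fin p ⊕ Fin q ≃ Fin n) {d : WithTop ℕ∞} :
    ContDiff ℝ d (costChart e) := by
  refine contDiff_symmSpace_iff.mpr fun i j ↦ ContDiff.add ?_ ?_
  · exact contDiff_kernelBlocks_apply (contDiff_symmSpace_iff.mp contDiff_fst)
      (fun a b ↦ contDiff_pi.mp (contDiff_pi.mp (contDiff_fst.comp contDiff_snd) a) b) _ _
  · simp only [diagonal_apply]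
    split_ifs <;> fun_prop

lemma addHaar_range_costChart {n p q : ℕ} (hpn : n < (p + 1).choose 2)
    (e : Fin p ⊕ Fin q ≃ Fin n) (ν : Measure (symmSpace n)) [ν.IsAddHaarMeasure] :
    ν (Set.range (costChart e)) = 0 := by
  -- The topologies from the norm and from the entries of a matrix agree only after unfolding
  -- `Matrix`, hence the instances are given by hand.
  refine addHaar_range_eq_zero_of_finrank_lt (hF := ⟨rfl⟩) (hν := ‹_›) ν (contDiff_costChart e) ?_
  have hcard : p + q = n := by simpa using Fintype.card_congr e
  rw [Module.finrank_prod, Module.finrank_prod, Module.finrank_matrix, Module.finrank_fin_fun,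
    finrank_symmSpace, finrank_symmSpace, Module.finrank_self]
  have hchoose := add_succ_choose_two p q
  rw [hcard] at hchoose
  simp only [Fintype.card_fin]
  lia

lemma exists_mem_range_costChart {n p : ℕ} (C : symmSpace n) {Y : Matrix (Fin n) (Fin p) ℝ}
    (hY : Function.Injective Y.mulVec) {μ : Fin n → ℝ} (hSY : (C.1 - diagonal μ) * Y = 0) :
    ∃ e : Fin p ⊕ Fin (n - p) ≃ Fin n, C ∈ Set.range (costChart e) := by
  have hpn : p ≤ n := by
    simpa using LinearMap.finrank_le_finrank_of_injective (f := Y.mulVecLin) hY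
  obtain ⟨e, T, W, hT, hS⟩ := exists_eq_kernelBlocks_submatrix (q := Fin (n - p)) (by simp [hpn])
    (C.2.sub (isSymm_diagonal μ)) hY hSY
  exact ⟨e, ⟨⟨T, hT⟩, W, μ⟩, Subtype.ext (sub_eq_iff_eq_add.mp hS).symm⟩

end NullRange

/-- for `p(p+1)/2 > n` and almost all symmetric `C`, every second-order
critical point of the Max-Cut Burer–Monteiro problem is globally optimal and `Y Yᵀ`
solves the Max-Cut SDP. -/
theorem maxcut_generic_global_optimality
    (n p : ℕ) (hn : 0 < n) (hp : 0 < p) (hpn : 2 * n < p * (p + 1)) :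
    IsNullSymmSet n {C | ¬ ∀ Y : Matrix (Fin n) (Fin p) ℝ,
      (∀ i, (Y * Yᵀ) i i = 1) →
      (∃ μ : Fin n → ℝ, (C - Matrix.diagonal μ) * Y = 0 ∧
        ∀ Ydot : Matrix (Fin n) (Fin p) ℝ,
          (∀ i, (Ydot * Yᵀ + Y * Ydotᵀ) i i = 0) →
          0 ≤ frobInner Ydot ((C - Matrix.diagonal μ) * Ydot)) →
      ((∀ Z : Matrix (Fin n) (Fin p) ℝ, (∀ i, (Z * Zᵀ) i i = 1) →
          (C * (Y * Yᵀ)).trace ≤ (C * (Z * Zᵀ)).trace) ∧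
       (∀ X : Matrix (Fin n) (Fin n) ℝ, X.IsSymm → X.PosSemidef →
          (∀ i, X i i = 1) → (C * (Y * Yᵀ)).trace ≤ (C * X).trace))} := by
  intro ν _
  have hchoose : n < (p + 1).choose 2 := by
    have hdouble := Nat.div_mul_cancel (Nat.even_mul_succ_self p).two_dvd
    rw [Nat.choose_two_right, Nat.add_sub_cancel, mul_comm]
    lia
  refine measure_mono_null (fun C hC ↦ Set.mem_iUnion.mpr ?_)
    (measure_iUnion_null fun e : Fin p ⊕ Fin (n - p) ≃ Fin n ↦ addHaar_range_costChart hchoose e ν)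
  by_contra hchart
  refine hC fun Y hY ⟨μ, hSY, hcurv⟩ ↦ ?_
  have hinj : ¬ Function.Injective Y.mulVec := fun h ↦ hchart (exists_mem_range_costChart C h hSY)
  have hS : (C.1 - diagonal μ).PosSemidef :=
    posSemidef_of_trace_nonneg_of_not_injective_mulVec (C.2.sub (isSymm_diagonal μ)) hinj
      fun V hV ↦ hcurv V fun i ↦ by
        have hV' : Y * Vᵀ = 0 := by simpa using congrArg transpose hV
        simp [hV, hV']
  have hopt (X : Matrix (Fin n) (Fin n) ℝ) (hX : X.PosSemidef) (hdiag : ∀ i, X i i = 1) :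
      (C.1 * (Y * Yᵀ)).trace ≤ (C.1 * X).trace :=
    trace_mul_le_of_posSemidef_sub_diagonal hS (by rw [← Matrix.mul_assoc, hSY, Matrix.zero_mul]) hX
      (funext fun i ↦ (hY i).trans (hdiag i).symm)
  exact ⟨fun Z ↦ hopt _ (posSemidef_self_mul_conjTranspose Z), fun X _ ↦ hopt X⟩

end
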